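/- Under Assumption 1, the unique minimizer Θ* of f over M^p is given explicitly as follows: Θ*_ii = [Θ̂_k]_{π(i),π(i)} + ζ_i for every i ∈ V_k; Θ*_ij = [Θ̂_k]_{π(i),π(j)} for every i ≠ j with i, j ∈ V_k; Θ*_ij = −T_ij / (S_ii·S_jj − T_ij²) whenever (i,j) is a bridge of G; and Θ*_ij = 0 for all other pairs i ≠ j. -/

import Mathlib

/-!
On the constraint set `|Θ_ij| = -Θ_ij` off the diagonal, so the objective is
`-log det Θ + tr (Θ (S - Λ))`. Let `Y` be the inverse of the minimizer `Θ`. The first-order conditions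
(`exists_isKKT`) give `Y_ii = S_ii`, `Y_ij ≥ S_ij - Λ_ij`, and equality wherever `Θ_ij < 0`.

Since `Θ` is a positive definite M-matrix, `Y` is entrywise nonnegative, and `Y_ij > 0` wherever
`Θ_ij < 0` (`inv_entry_pos`). There `S_ij - Λ_ij = Y_ij > 0`, so the support of `Θ` is contained in the
thresholded graph (`adj_of_ne_zero`); this gives the zero entries.

A bridge `(i, j)` splits the vertices in two sides, with `Θ_ij` the only nonzero entry across. Solving
`Θ Y = 1` on one side (`separation`, `cut_entry`) gives `Θ_ij = -Y_ij / (Y_ii Y_jj - Y_ij ^ 2)` and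
`Y_mb = Y_mi Y_ib / Y_ii` for `m` and `b` on different sides. If `T_ij ≠ 0`, then
`Y_ij ≥ S_ij - Λ_ij > 0`, so `Θ_ij < 0`, and complementary slackness yields `Y_ij = T_ij`
(`bridge_entries`).

For a block `V`, every outside neighbour of `V` hangs on it by a bridge, and the product formula shows
that `Θ_VV` with `ζ` subtracted from the diagonal inverts `Y_VV` (`block_sum`, `blockMat_mul`). The KKT
conditions restrict to `V`, and they characterize the minimizer of the subproblem because
`log det M ≤ tr M - n` with equality only at `M = 1` (`eq_of_isKKT`, `block_unique`). Working
downwards from `Θ` in this way, no existence result for the subproblems is needed.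
-/

attribute [local instance] Classical.propDecidable

noncomputable section

open Matrix

/-- The MTP2 constraint set `M^n`: real symmetric positive definite matrices with
nonpositive off-diagonal entries. -/
def MSet {n : Type*} [Fintype n] [DecidableEq n] (Θ : Matrix n n ℝ) : Prop :=
  Θ.IsSymm ∧ Θ.PosDef ∧ ∀ i j, i ≠ j → Θ i j ≤ 0

/-- The objective `f(Θ) = -log det Θ + tr(Θ S) + ∑_{i ≠ j} Λ_ij |Θ_ij|`. -/
def objf {n : Type*} [Fintype n] [DecidableEq n] (S Λ Θ : Matrix n n ℝ) : ℝ :=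
  -Real.log Θ.det + (Θ * S).trace + ∑ i, ∑ j, if i = j then 0 else Λ i j * |Θ i j|

/-- The thresholded sample covariance matrix `T` (MTP₂ version). -/
def thresh {p : ℕ} (S Λ : Matrix (Fin p) (Fin p) ℝ) : Matrix (Fin p) (Fin p) ℝ :=
  Matrix.of fun i j => if i ≠ j ∧ Λ i j < S i j then S i j - Λ i j else 0

/-- The thresholded matrix `T` for the traditional graphical lasso. -/
def threshGL {p : ℕ} (S Λ : Matrix (Fin p) (Fin p) ℝ) : Matrix (Fin p) (Fin p) ℝ :=
  Matrix.of fun i j =>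
    if i = j ∨ |S i j| ≤ Λ i j then 0 else S i j - Λ i j * Real.sign (S i j)

/-- The support graph of a (symmetric) matrix: `i ~ j` iff `i ≠ j` and `A i j ≠ 0`. -/
def suppG {p : ℕ} (A : Matrix (Fin p) (Fin p) ℝ) : SimpleGraph (Fin p) :=
  SimpleGraph.fromRel fun i j => A i j ≠ 0

/-- The graph obtained from `G` by deleting all bridges. -/
def bridgeDeleted {V : Type*} (G : SimpleGraph V) : SimpleGraph V :=
  G.deleteEdges {e | G.IsBridge e}

/-- `V` is a bridge-block of `G`: a connected component of the bridge-deleted graph. -/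
def IsBlock {p : ℕ} (G : SimpleGraph (Fin p)) (V : Finset (Fin p)) : Prop :=
  ∃ i, ∀ j, j ∈ V ↔ (bridgeDeleted G).Reachable i j

/-- `ζ_i` defined from `S` and a thresholded matrix `T`. -/
def zetaT {p : ℕ} (S T : Matrix (Fin p) (Fin p) ℝ) (i : Fin p) : ℝ :=
  (1 / S i i) *
    ∑ m, if (suppG T).IsBridge s(i, m)
      then T i m ^ 2 / (S i i * S m m - T i m ^ 2) else 0

/-- `ζ_i` for the MTP₂ problem. -/
def zeta {p : ℕ} (S Λ : Matrix (Fin p) (Fin p) ℝ) (i : Fin p) : ℝ :=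
  zetaT S (thresh S Λ) i

/-- Principal submatrix of `A` on the index set `V`. -/
def subMat {p : ℕ} (A : Matrix (Fin p) (Fin p) ℝ) (V : Finset (Fin p)) :
    Matrix ↥V ↥V ℝ :=
  A.submatrix (fun a => (a : Fin p)) fun a => (a : Fin p)

/-- `Θk` is the minimizer of the `k`-th MTP₂ subproblem on the bridge-block `V`. -/
def IsSubMinimizer {p : ℕ} (S Λ : Matrix (Fin p) (Fin p) ℝ) (V : Finset (Fin p))
    (Θk : Matrix ↥V ↥V ℝ) : Prop :=
  MSet Θk ∧ ∀ Θ' : Matrix ↥V ↥V ℝ, MSet Θ' →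
    -Real.log Θk.det + (Θk * subMat (S - Λ) V).trace ≤
      -Real.log Θ'.det + (Θ' * subMat (S - Λ) V).trace

/-- `Θk` is the minimizer of the `k`-th graphical lasso subproblem on the block `V`. -/
def IsGLSubMinimizer {p : ℕ} (S Λ : Matrix (Fin p) (Fin p) ℝ) (V : Finset (Fin p))
    (Θk : Matrix ↥V ↥V ℝ) : Prop :=
  Θk.IsSymm ∧ Θk.PosDef ∧ ∀ Θ' : Matrix ↥V ↥V ℝ, Θ'.IsSymm → Θ'.PosDef →
    objf (subMat S V) (subMat Λ V) Θk ≤ objf (subMat S V) (subMat Λ V) Θ'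

/-- The product `∏_t R_{u_t,u_{t+1}} / √(S_{u_t,u_t} S_{u_{t+1},u_{t+1}})` over the
consecutive pairs of the list `l = [u_0, …, u_{2T+1}]`. -/
def chainProd {p : ℕ} (S R : Matrix (Fin p) (Fin p) ℝ) (l : List (Fin p)) : ℝ :=
  ((l.zip l.tail).map fun q => R q.1 q.2 / Real.sqrt (S q.1 q.1 * S q.2 q.2)).prod

/-- The node sequence `u_0 = i, u_1, u_2, …, u_{2T-1}, u_{2T}, u_{2T+1} = j`, where
`(u_1,u_2), …, (u_{2T-1},u_{2T})` are the bridges traversed by the walk `W`, in order of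
traversal and oriented in the direction of traversal. -/
def bridgeSeq {p : ℕ} (G : SimpleGraph (Fin p)) {i j : Fin p} (W : G.Walk i j) :
    List (Fin p) :=
  i :: (((W.darts.filter fun d => decide (G.IsBridge d.edge)).flatMap
      fun d => [d.toProd.1, d.toProd.2]) ++ [j])


/-! ### Log-determinants and perturbations of positive definite matrices -/

section General

variable {n : Type*} [Fintype n]

theorem quad_bound (F : Matrix n n ℝ) (x : n → ℝ) :
    |x ⬝ᵥ (F *ᵥ x)| ≤ (∑ i, ∑ j, |F i j|) * (x ⬝ᵥ x) := by
  have key : ∀ i j, |x i| * |x j| ≤ x ⬝ᵥ x := fun i j => by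
    have h1 : ∀ k, x k * x k ≤ x ⬝ᵥ x := fun k =>
      Finset.single_le_sum (f := fun k => x k * x k) (fun k _ => mul_self_nonneg (x k))
        (Finset.mem_univ k)
    nlinarith [h1 i, h1 j, sq_nonneg (|x i| - |x j|), sq_abs (x i), sq_abs (x j)]
  simp only [dotProduct, mulVec, Finset.mul_sum] at key ⊢
  refine (Finset.abs_sum_le_sum_abs _ _).trans ?_
  rw [← Finset.mul_sum, Finset.sum_mul]
  refine Finset.sum_le_sum fun i _ => (Finset.abs_sum_le_sum_abs _ _).trans ?_
  rw [Finset.sum_mul]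
  refine Finset.sum_le_sum fun j _ => ?_
  rw [abs_mul, abs_mul]
  calc |x i| * (|F i j| * |x j|) = |F i j| * (|x i| * |x j|) := by ring
    _ ≤ _ := mul_le_mul_of_nonneg_left (key i j) (abs_nonneg _)

variable [DecidableEq n]

theorem exists_factor {A : Matrix n n ℝ} (hA : A.PosDef) :
    ∃ B : Matrix n n ℝ, IsUnit B ∧ A = Bᴴ * B := by
  open scoped MatrixOrder Matrix.Norms.L2Operator in
  obtain ⟨B, hB, h⟩ :=
    (CStarAlgebra.isStrictlyPositive_iff_eq_star_mul_self (a := A)).1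
      (Matrix.isStrictlyPositive_iff_posDef.2 hA)
  exact ⟨B, hB, h⟩

theorem hermitian_eq_one {M : Matrix n n ℝ} (hM : M.IsHermitian)
    (h : ∀ i, hM.eigenvalues i = 1) : M = 1 := by
  have h1 : hM.eigenvalues = fun _ => 1 := funext h
  rw [hM.spectral_theorem, h1]
  have : (diagonal (RCLike.ofReal ∘ fun _ : n => (1 : ℝ)) : Matrix n n ℝ) = 1 := by
    ext i j; simp [diagonal, one_apply]
  rw [this]; simp

theorem logdet_le {M : Matrix n n ℝ} (hM : M.PosDef) :
    Real.log M.det ≤ M.trace - Fintype.card n := by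
  have hdet : M.det = ∏ i, hM.1.eigenvalues i := by simpa using hM.1.det_eq_prod_eigenvalues
  have htr : M.trace = ∑ i, hM.1.eigenvalues i := by simpa using hM.1.trace_eq_sum_eigenvalues
  rw [hdet, htr, Real.log_prod fun i _ => (hM.eigenvalues_pos i).ne']
  calc _ ≤ ∑ i, (hM.1.eigenvalues i - 1) :=
        Finset.sum_le_sum fun i _ => Real.log_le_sub_one_of_pos (hM.eigenvalues_pos i)
    _ = _ := by simp

/-- The equality case of `logdet_le`, from strictness of `log t ≤ t - 1` away from `t = 1`. -/
theorem eq_one_of_le_logdet {M : Matrix n n ℝ} (hM : M.PosDef)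
    (h : M.trace - Fintype.card n ≤ Real.log M.det) : M = 1 := by
  have hdet : M.det = ∏ i, hM.1.eigenvalues i := by simpa using hM.1.det_eq_prod_eigenvalues
  have htr : M.trace = ∑ i, hM.1.eigenvalues i := by simpa using hM.1.trace_eq_sum_eigenvalues
  rw [hdet, htr, Real.log_prod fun i _ => (hM.eigenvalues_pos i).ne'] at h
  apply hermitian_eq_one hM.1
  by_contra! hne
  obtain ⟨k, hk⟩ := hne
  have : ∑ i, Real.log (hM.1.eigenvalues i) < ∑ i, (hM.1.eigenvalues i - 1) :=
    Finset.sum_lt_sum (fun i _ => Real.log_le_sub_one_of_pos (hM.eigenvalues_pos i))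
      ⟨k, Finset.mem_univ k, Real.log_lt_sub_one_of_pos (hM.eigenvalues_pos k) hk⟩
  simp at this
  linarith

/-- The equality case of `log det (X Y) ≤ tr (X Y) - n`. Although `X * Y` need not be symmetric,
with `Y = Bᴴ B` it has the determinant and trace of the positive definite matrix `B X Bᴴ`. -/
theorem mul_eq_one_of_logdet {X Y : Matrix n n ℝ} (hX : X.PosDef) (hY : Y.PosDef)
    (h : (X * Y).trace - Fintype.card n ≤ Real.log X.det + Real.log Y.det) : X * Y = 1 := by
  obtain ⟨B, hB, rfl⟩ := exists_factor hY
  have hM : (B * X * Bᴴ).PosDef :=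
    hX.mul_mul_conjTranspose_same (vecMul_injective_of_isUnit hB)
  have hdet : Real.log (B * X * Bᴴ).det = Real.log X.det + Real.log (Bᴴ * B).det := by
    rw [← Real.log_mul hX.det_pos.ne' hY.det_pos.ne']
    congr 1; simp only [det_mul]; ring
  have htr : (B * X * Bᴴ).trace = (X * (Bᴴ * B)).trace := by
    rw [mul_assoc, trace_mul_comm, mul_assoc]
  have h1 := eq_one_of_le_logdet hM (by rw [hdet, htr]; exact h)
  rw [← mul_assoc]
  rw [mul_assoc] at h1
  exact mul_eq_one_comm.1 h1

/-- Positive definiteness is stable in every symmetric direction: with `Θ = Bᴴ B`, the matrix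
`Θ + s E` is congruent to `1 + s F` for `F = B⁻ᴴ E B⁻¹`. -/
theorem posDef_perturb {Θ E : Matrix n n ℝ} (hΘ : Θ.PosDef) (hE : E.IsHermitian) :
    ∃ δ : ℝ, 0 < δ ∧ ∀ s : ℝ, 0 < s → s < δ → (Θ + s • E).PosDef := by
  obtain ⟨B, hB, rfl⟩ := exists_factor hΘ
  have hu : IsUnit B.det := (isUnit_iff_isUnit_det B).1 hB
  have hu' : IsUnit Bᴴ.det := by simpa using hu
  set F : Matrix n n ℝ := Bᴴ⁻¹ * E * B⁻¹ with hF
  have hFE : Bᴴ * F * B = E := by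
    rw [hF, mul_assoc Bᴴ⁻¹, mul_nonsing_inv_cancel_left _ _ hu', nonsing_inv_mul_cancel_right _ _ hu]
  have hFh : F.IsHermitian := by
    have := isHermitian_conjTranspose_mul_mul (B⁻¹) hE
    rwa [conjTranspose_nonsing_inv] at this
  set K := ∑ i, ∑ j, |F i j| with hK
  have hK0 : 0 ≤ K := Finset.sum_nonneg fun i _ => Finset.sum_nonneg fun j _ => abs_nonneg _
  refine ⟨1 / (K + 1), by positivity, fun s hs hs' => ?_⟩
  have hsK : s * K < 1 := by
    rw [lt_div_iff₀ (by positivity)] at hs'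
    nlinarith
  have h1 : ((1 : Matrix n n ℝ) + s • F).PosDef := by
    refine PosDef.of_dotProduct_mulVec_pos (isHermitian_one.add (hFh.smul (IsSelfAdjoint.all s))) ?_
    intro x hx
    have hxx : 0 < x ⬝ᵥ x := by
      simpa using (dotProduct_star_self_pos_iff (v := x)).2 hx
    have hb := (abs_le.1 (quad_bound F x)).1
    rw [← hK] at hb
    simp only [star_trivial, add_mulVec, one_mulVec, smul_mulVec, dotProduct_add, dotProduct_smul,
      smul_eq_mul]
    nlinarith [mul_le_mul_of_nonneg_left hb hs.le, mul_lt_mul_of_pos_right hsK hxx]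
  have := h1.conjTranspose_mul_mul_same (mulVec_injective_of_isUnit hB)
  convert this using 1
  rw [mul_add, add_mul, mul_one, Matrix.mul_smul, Matrix.smul_mul, hFE]

theorem hasDerivAt_det (M : Matrix n n ℝ) :
    HasDerivAt (fun s : ℝ => (1 + s • M).det) M.trace 0 := by
  set q := (det (1 + (Polynomial.X : Polynomial ℝ) • M.map Polynomial.C)).divX.divX
  have hq : (fun s : ℝ => (1 + s • M).det) = fun s => 1 + M.trace * s + q.eval s * s ^ 2 :=
    funext fun s => det_one_add_smul s M
  rw [hq]
  have h1 : HasDerivAt (fun s : ℝ => 1 + M.trace * s) M.trace 0 := by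
    simpa using ((hasDerivAt_id (0 : ℝ)).const_mul M.trace).const_add 1
  have h2 := (q.hasDerivAt 0).mul (hasDerivAt_pow 2 (0 : ℝ))
  exact (h1.add h2).congr_deriv (by simp)

/-- First-order condition for `Θ ↦ -log det Θ + tr (Θ C)` in a feasible direction `E`; the matrix
`Y` is the inverse of `Θ`. -/
theorem first_order {Θ E C Y : Matrix n n ℝ} (hΘ : Θ.PosDef) (hY : Θ * Y = 1)
    {δ : ℝ} (hδ : 0 < δ)
    (hmin : ∀ s, 0 < s → s < δ →
      -Real.log Θ.det + (Θ * C).trace ≤ -Real.log (Θ + s • E).det + ((Θ + s • E) * C).trace) :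
    (Y * E).trace ≤ (E * C).trace := by
  set g : ℝ → ℝ := fun s => -Real.log (1 + s • (Y * E)).det + s * (E * C).trace with hg
  have hfac : ∀ s : ℝ, Θ + s • E = Θ * (1 + s • (Y * E)) := fun s => by
    rw [mul_add, mul_one, Matrix.mul_smul, ← mul_assoc, hY, one_mul]
  have hd : HasDerivAt g (-(Y * E).trace + (E * C).trace) 0 := by
    have h1 := ((hasDerivAt_det (Y * E)).log (by simp)).neg
    have h2 := (hasDerivAt_id (0 : ℝ)).mul_const (E * C).trace
    exact (h1.add h2).congr_deriv (by simp)
  have hnn : 0 ≤ -(Y * E).trace + (E * C).trace := by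
    have ht := hd.tendsto_slope_zero_right
    refine ge_of_tendsto ht ?_
    -- log-additivity of the determinant needs `det (1 + s Y E) ≠ 0`, which holds near `0`
    have hne : ∀ᶠ s in nhdsWithin (0 : ℝ) (Set.Ioi 0), (1 + s • (Y * E)).det ≠ 0 := by
      have hc := (hasDerivAt_det (Y * E)).continuousAt
      refine Filter.Eventually.filter_mono nhdsWithin_le_nhds (hc.eventually_ne (by simp))
    filter_upwards [hne, Ioo_mem_nhdsGT hδ] with s hs hs'
    have h := hmin s hs'.1 hs'.2
    rw [hfac s, det_mul, Real.log_mul hΘ.det_pos.ne' hs, ← hfac s, add_mul, trace_add,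
      Matrix.smul_mul, trace_smul, smul_eq_mul] at h
    have h0 : g 0 = 0 := by simp [hg]
    have h3 : 0 ≤ g s := by simp only [hg]; linarith
    rw [zero_add, h0, sub_zero, smul_eq_mul]
    exact mul_nonneg (inv_nonneg.2 hs'.1.le) h3
  linarith

end General

/-! ### Optimality conditions, M-matrices and separation -/

section KKT

variable {n : Type*} [Fintype n]

theorem trace_mul_eq_sum (A B : Matrix n n ℝ) : (A * B).trace = ∑ i, ∑ j, A i j * B j i := by
  simp [trace, mul_apply]

/-- Principal submatrices of a positive definite matrix have trivial kernel, phrased without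
submatrices: `wᵀ Θ w = 0` for such a `w`. -/
theorem eq_zero_of_mulVec_eq_zero_on_support {Θ : Matrix n n ℝ} (hΘ : Θ.PosDef) {w : n → ℝ}
    (h : ∀ a, w a ≠ 0 → (Θ *ᵥ w) a = 0) : w = 0 := by
  by_contra hw
  have h1 := hΘ.dotProduct_mulVec_pos hw
  refine h1.ne' (Finset.sum_eq_zero fun a _ => ?_)
  by_cases ha : w a = 0
  · simp [ha]
  · simp [h a ha]

variable [DecidableEq n]

/-- On the constraint set the penalty is linear, and it shifts `S` to `S - Λ`. -/
theorem objf_eq {S Λ Θ : Matrix n n ℝ} (hΛ : Λ.IsSymm) (hd : ∀ i, Λ i i = 0) (hΘ : MSet Θ) :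
    objf S Λ Θ = -Real.log Θ.det + (Θ * (S - Λ)).trace := by
  have : (∑ i, ∑ j, if i = j then 0 else Λ i j * |Θ i j|) = -(Θ * Λ).trace := by
    rw [trace_mul_eq_sum, ← Finset.sum_neg_distrib]
    refine Finset.sum_congr rfl fun i _ => ?_
    rw [← Finset.sum_neg_distrib]
    refine Finset.sum_congr rfl fun j _ => ?_
    split_ifs with h
    · subst h; simp [hd]
    · rw [abs_of_nonpos (hΘ.2.2 i j h), hΛ.apply i j]; ring
  unfold objf
  rw [mul_sub, trace_sub, this]
  ring

/-- Positive definite matrices with nonpositive off-diagonal entries are inverse-positive. -/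
theorem nonneg_of_mulVec_nonneg {Θ : Matrix n n ℝ} (hΘ : MSet Θ) {x : n → ℝ}
    (h : ∀ a, 0 ≤ (Θ *ᵥ x) a) : ∀ a, 0 ≤ x a := by
  set w : n → ℝ := fun a => max (-x a) 0 with hw
  have hw0 : ∀ a, 0 ≤ w a := fun a => le_max_right _ _
  -- the quadratic form at the negative part of `x` is nonpositive
  have hle : w ⬝ᵥ (Θ *ᵥ w) ≤ -(w ⬝ᵥ (Θ *ᵥ x)) := by
    simp only [dotProduct, mulVec, Finset.mul_sum, ← Finset.sum_neg_distrib]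
    refine Finset.sum_le_sum fun i _ => Finset.sum_le_sum fun j _ => ?_
    have hj : -x j ≤ w j := le_max_left _ _
    by_cases hij : i = j
    · subst hij
      have : w i * w i = -(w i * x i) := by
        simp only [hw]
        rcases le_total (-x i) 0 with h0 | h0
        · simp [max_eq_right h0]
        · rw [max_eq_left h0]; ring
      apply le_of_eq
      linear_combination Θ i i * this
    · nlinarith [mul_nonneg (mul_nonneg (hw0 i) (neg_nonneg.2 (hΘ.2.2 i j hij)))
        (by linarith : 0 ≤ w j + x j)]
  have hnn : 0 ≤ w ⬝ᵥ (Θ *ᵥ x) := Finset.sum_nonneg fun a _ => mul_nonneg (hw0 a) (h a)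
  have hz : w = 0 := by
    by_contra hne
    have := hΘ.2.1.dotProduct_mulVec_pos hne
    rw [star_trivial] at this
    linarith
  intro a
  have h1 : w a = 0 := congrFun hz a
  have h2 : -x a ≤ w a := le_max_left _ _
  linarith

theorem inv_entries {Θ Y : Matrix n n ℝ} (hΘ : MSet Θ) (hY : Θ * Y = 1) :
    ∀ i j, 0 ≤ Y i j := by
  intro i j
  refine nonneg_of_mulVec_nonneg hΘ (x := fun k => Y k j) (fun a => ?_) i
  have : (Θ *ᵥ fun k => Y k j) a = (Θ * Y) a j := rfl
  rw [this, hY, one_apply]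
  split_ifs <;> norm_num

/-- Where `Θ` has a strictly negative off-diagonal entry, its inverse has a strictly positive one:
in row `i` of `Θ * Y = 1`, all terms would otherwise be nonpositive and the one at `j` negative. -/
theorem inv_entry_pos {Θ Y : Matrix n n ℝ} (hΘ : MSet Θ) (hY : Θ * Y = 1) (hYp : Y.PosDef)
    {i j : n} (hij : i ≠ j) (h : Θ i j < 0) : 0 < Y i j := by
  have h0 : ∑ k, Θ i k * Y k j = 0 := by
    have : (Θ * Y) i j = 0 := by rw [hY, one_apply_ne hij]
    rwa [mul_apply] at this
  by_contra hn
  have hz : Y i j = 0 := le_antisymm (not_lt.1 hn) (inv_entries hΘ hY i j)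
  have hlt : ∑ k, Θ i k * Y k j < ∑ _k : n, (0 : ℝ) := by
    refine Finset.sum_lt_sum (fun k _ => ?_) ⟨j, Finset.mem_univ j, ?_⟩
    · by_cases hk : i = k
      · subst hk; simp [hz]
      · exact mul_nonpos_of_nonpos_of_nonneg (hΘ.2.2 i k hk) (inv_entries hΘ hY k j)
    · exact mul_neg_of_neg_of_pos h hYp.diag_pos
  simp [h0] at hlt

/-- The Karush-Kuhn-Tucker conditions for minimizing `-log det Θ + tr (Θ C)` over `MSet`, with dual
variable the inverse `Y` of `Θ`: feasibility `C ≤ Y` with equality on the diagonal, and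
complementary slackness. The two last clauses are stated for all `i j`; the diagonal ones follow
from equality on the diagonal. -/
def IsKKT (C Θ Y : Matrix n n ℝ) : Prop :=
  Θ * Y = 1 ∧ Y.IsSymm ∧ Y.PosDef ∧ (∀ i, Y i i = C i i) ∧ (∀ i j, C i j ≤ Y i j) ∧
    ∀ i j, Θ i j < 0 → Y i j = C i j

/-- Minimizers satisfy the KKT conditions, tested on the directions `±(e_i e_jᵀ + e_j e_iᵀ)`. -/
theorem exists_isKKT {C Θ : Matrix n n ℝ} (hC : C.IsSymm) (hΘ : MSet Θ)
    (hmin : ∀ Θ', MSet Θ' →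
      -Real.log Θ.det + (Θ * C).trace ≤ -Real.log Θ'.det + (Θ' * C).trace) :
    ∃ Y, IsKKT C Θ Y := by
  have hu : IsUnit Θ.det := hΘ.2.1.det_pos.ne'.isUnit
  set Y := Θ⁻¹ with hYdef
  have hY : Θ * Y = 1 := mul_nonsing_inv _ hu
  have hYp : Y.PosDef := hΘ.2.1.inv
  have hYs : Y.IsSymm := by
    rw [IsSymm, hYdef, transpose_nonsing_inv, hΘ.1.eq]
  have htr : ∀ i j, (Y * (single i j 1 + single j i 1)).trace = 2 * Y i j := fun i j => by
    rw [mul_add, trace_add, trace_mul_single, trace_mul_single, ← hYs.apply i j]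
    simp; ring
  have htrC : ∀ i j, ((single i j 1 + single j i 1) * C).trace = 2 * C i j := fun i j => by
    rw [add_mul, trace_add, trace_single_mul, trace_single_mul, ← hC.apply i j]
    simp; ring
  have hEs : ∀ i j : n, (single i j (1 : ℝ) + single j i 1).IsSymm := fun i j => by
    rw [IsSymm, transpose_add, transpose_single, transpose_single, add_comm]
  have hE : ∀ i j : n, (single i j (1 : ℝ) + single j i 1).IsHermitian := fun i j => by
    rw [IsHermitian, conjTranspose_eq_transpose_of_trivial]; exact hEs i j
  -- a small decrease of the entries `(i, j)` and `(j, i)` keeps `Θ` feasible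
  have hdown : ∀ i j, C i j ≤ Y i j := by
    intro i j
    obtain ⟨δ, hδ, hpd⟩ := posDef_perturb hΘ.2.1 (hE i j).neg
    have := first_order (C := C) hΘ.2.1 hY hδ fun s hs hs' => hmin _
      ⟨hΘ.1.add ((hEs i j).neg.smul s), hpd s hs hs', fun a b hab => by
        have h1 := hΘ.2.2 a b hab
        simp only [Matrix.add_apply, Matrix.smul_apply, Matrix.neg_apply, single_apply, smul_eq_mul]
        split_ifs <;> nlinarith⟩
    rw [mul_neg, neg_mul, trace_neg, trace_neg, htr, htrC] at this
    linarith
  have hup : ∀ i j, (i = j ∨ Θ i j < 0) → Y i j ≤ C i j := by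
    intro i j hij
    obtain ⟨δ, hδ, hpd⟩ := posDef_perturb hΘ.2.1 (hE i j)
    -- a step of length at most `-Θ i j / 2` keeps the entry nonpositive
    obtain ⟨δ', hδ', hle, hb⟩ : ∃ δ' : ℝ, 0 < δ' ∧ δ' ≤ δ ∧ (i ≠ j → 2 * δ' ≤ -Θ i j) := by
      rcases hij with rfl | hneg
      · exact ⟨δ, hδ, le_rfl, fun h => absurd rfl h⟩
      · refine ⟨min δ (-Θ i j / 2), lt_min hδ (by linarith), min_le_left _ _, fun _ => ?_⟩
        linarith [min_le_right δ (-Θ i j / 2)]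
    have := first_order (C := C) hΘ.2.1 hY hδ' fun s hs hs' => hmin _
      ⟨hΘ.1.add ((hEs i j).smul s), hpd s hs (hs'.trans_le hle), fun a b hab => by
        have h1 := hΘ.2.2 a b hab
        have h2 := hΘ.1.apply i j
        simp only [Matrix.add_apply, Matrix.smul_apply, single_apply, smul_eq_mul]
        split_ifs with h3 h4 h4
        · exact absurd (h3.1.symm.trans h4.2) (by grind)
        · obtain ⟨rfl, rfl⟩ := h3
          linarith [hb hab]
        · obtain ⟨rfl, rfl⟩ := h4
          linarith [hb hab.symm]
        · linarith⟩
    rw [htr, htrC] at this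
    linarith
  exact ⟨Y, hY, hYs, hYp, fun i => le_antisymm (hup i i (Or.inl rfl)) (hdown i i), hdown,
    fun i j h => le_antisymm (hup i j (Or.inr h)) (hdown i j)⟩

/-- A KKT point is the only feasible matrix whose objective value is at most its own. -/
theorem eq_of_isKKT {C X Y X' : Matrix n n ℝ} (hC : C.IsSymm) (hX : MSet X)
    (hK : IsKKT C X Y) (hX' : MSet X')
    (hle : -Real.log X'.det + (X' * C).trace ≤ -Real.log X.det + (X * C).trace) : X' = X := by
  obtain ⟨hXY, hYs, hYp, hdiag, hge, hcomp⟩ := hK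
  have h1 : (X * C).trace = Fintype.card n := by
    rw [← trace_one, ← hXY, trace_mul_eq_sum, trace_mul_eq_sum]
    refine Finset.sum_congr rfl fun i _ => Finset.sum_congr rfl fun j _ => ?_
    by_cases hij : i = j
    · subst hij; rw [hdiag]
    · rcases (hX.2.2 i j hij).lt_or_eq with h | h
      · rw [hYs.apply i j, hC.apply i j, hcomp i j h]
      · simp [h]
  have h2 : (X' * Y).trace ≤ (X' * C).trace := by
    rw [trace_mul_eq_sum, trace_mul_eq_sum]
    refine Finset.sum_le_sum fun i _ => Finset.sum_le_sum fun j _ => ?_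
    by_cases hij : i = j
    · subst hij; rw [hdiag]
    · exact mul_le_mul_of_nonpos_left (hge j i) (hX'.2.2 i j hij)
  have h3 : Real.log X.det + Real.log Y.det = 0 := by
    rw [← Real.log_mul hX.2.1.det_pos.ne' hYp.det_pos.ne', ← det_mul, hXY, det_one, Real.log_one]
  have h4 : X' * Y = 1 := mul_eq_one_of_logdet hX'.2.1 hYp (by linarith)
  calc X' = X' * (Y * X) := by rw [mul_eq_one_comm.1 hXY, mul_one]
    _ = X := by rw [← mul_assoc, h4, one_mul]

/-- Gaussian conditional independence: if the single vertex `i` separates `B` from the rest in the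
support of `Θ`, then the inverse `Y` satisfies `Y_jb = Y_ji Y_ib / Y_ii` for `j` in `B` and `b`
outside `B`. -/
theorem separation {Θ Y : Matrix n n ℝ} (hΘ : Θ.PosDef) (hY : Θ * Y = 1)
    (B : n → Prop) {i : n} (hi : ¬B i)
    (hsep : ∀ a c, B a → ¬B c → c ≠ i → Θ a c = 0) {j b : n} (hj : B j) (hb : ¬B b) :
    Y i i * Y j b = Y i b * Y j i := by
  set w : n → ℝ := fun c => if B c then Y i i * Y c b - Y i b * Y c i else 0 with hw
  have hent : ∀ a d, ∑ c, Θ a c * Y c d = if a = d then 1 else 0 := fun a d => by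
    rw [← mul_apply, hY, one_apply]
  have hw0 : w = 0 := by
    refine eq_zero_of_mulVec_eq_zero_on_support hΘ fun a ha => ?_
    have hBa : B a := by
      by_contra h
      exact ha (by simp [hw, h])
    have hai : a ≠ i := fun h => hi (h ▸ hBa)
    have hab : a ≠ b := fun h => hb (h ▸ hBa)
    -- the truncation to `B` is harmless: the untruncated vector vanishes at `i`
    have h1 : (Θ *ᵥ w) a = ∑ c, Θ a c * (Y i i * Y c b - Y i b * Y c i) := by
      refine Finset.sum_congr rfl fun c _ => ?_
      simp only [hw]
      split_ifs with hc
      · rfl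
      · by_cases hci : c = i
        · subst hci; ring
        · rw [hsep a c hBa hc hci]; ring
    have h2 : ∑ c, Θ a c * (Y i i * Y c b - Y i b * Y c i) =
        Y i i * ∑ c, Θ a c * Y c b - Y i b * ∑ c, Θ a c * Y c i := by
      rw [Finset.mul_sum, Finset.mul_sum, ← Finset.sum_sub_distrib]
      exact Finset.sum_congr rfl fun c _ => by ring
    rw [h1, h2, hent, hent, if_neg hai, if_neg hab]
    ring
  have := congrFun hw0 j
  simp only [hw, if_pos hj, Pi.zero_apply] at this
  linarith

/-- If `(i, j)` is the only nonzero entry of `Θ` linking `B` to its complement, that entry is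
determined by the `2 × 2` principal submatrix of the inverse on `{i, j}`. -/
theorem cut_entry {Θ Y : Matrix n n ℝ} (hΘ : Θ.PosDef) (hY : Θ * Y = 1) (hYs : Y.IsSymm)
    (B : n → Prop) {i j : n} (hi : ¬B i) (hj : B j)
    (hsep : ∀ a c, B a → ¬B c → c ≠ i → Θ a c = 0) (hij : ∀ c, B c → c ≠ j → Θ i c = 0) :
    Θ i j * (Y i i * Y j j - Y i j ^ 2) = -Y i j := by
  have hent : ∀ a d, ∑ c, Θ a c * Y c d = if a = d then 1 else 0 := fun a d => by
    rw [← mul_apply, hY, one_apply]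
  have hne : i ≠ j := fun h => hi (h ▸ hj)
  have h1 : ∑ c, Θ i c * (Y i i * Y c j - Y i j * Y c i) =
      Y i i * ∑ c, Θ i c * Y c j - Y i j * ∑ c, Θ i c * Y c i := by
    rw [Finset.mul_sum, Finset.mul_sum, ← Finset.sum_sub_distrib]
    exact Finset.sum_congr rfl fun c _ => by ring
  -- by conditional independence across the cut only the term `c = j` survives
  have h2 : ∑ c, Θ i c * (Y i i * Y c j - Y i j * Y c i) =
      Θ i j * (Y i i * Y j j - Y i j * Y j i) := by
    refine Finset.sum_eq_single j (fun c _ hcj => ?_) (by simp)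
    by_cases hc : B c
    · rw [hij c hc hcj]; ring
    · have h3 := separation hΘ hY B hi hsep hj hc
      rw [hYs.apply c j, hYs.apply c i, hYs.apply i j] at h3
      linear_combination Θ i c * h3
  rw [h2, hent, hent, if_neg hne, if_pos rfl, hYs.apply i j] at h1
  linear_combination h1

/-- The principal submatrix of `Θ` on `V`, with `z` subtracted from the diagonal. -/
def blockMat (Θ : Matrix n n ℝ) (z : n → ℝ) (V : Finset n) : Matrix V V ℝ :=
  Matrix.of fun a b => if a = b then Θ a b - z a else Θ a b

/-- The hypothesis says that the rows of `Θ`, restricted to columns outside `V`, contribute to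
`Θ * Y = 1` exactly what subtracting `z` from the diagonal makes up for; hence `blockMat Θ z V`
inverts the principal submatrix of `Y` on `V`. -/
theorem blockMat_mul {Θ Y : Matrix n n ℝ} (hY : Θ * Y = 1) (z : n → ℝ) (V : Finset n)
    (h : ∀ a ∈ V, ∀ b ∈ V, ∑ m, (if m ∈ V then 0 else Θ a m * Y m b) = -(z a * Y a b)) :
    blockMat Θ z V * Y.submatrix (fun a : V => (a : n)) (fun a : V => (a : n)) = 1 := by
  ext a b
  have hent : ∑ c, Θ a c * Y c b = if (a : n) = b then 1 else 0 := by
    rw [← mul_apply, hY, one_apply]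
  have h1 : ∑ c : V, Θ a c * Y c b = ∑ c, if c ∈ V then Θ a c * Y c b else 0 := by
    rw [Finset.sum_coe_sort V (fun c => Θ a c * Y c b)]
    simp [Finset.sum_ite_mem]
  have h2 : ∑ c, Θ a c * Y c b = (∑ c, if c ∈ V then Θ a c * Y c b else 0) +
      ∑ m, (if m ∈ V then 0 else Θ a m * Y m b) := by
    rw [← Finset.sum_add_distrib]
    exact Finset.sum_congr rfl fun c _ => by split_ifs <;> simp
  have h3 : (blockMat Θ z V * Y.submatrix (fun a : V => (a : n)) (fun a : V => (a : n))) a b =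
      (∑ c : V, Θ a c * Y c b) - z a * Y a b := by
    rw [mul_apply, eq_sub_iff_add_eq]
    have : z a * Y a b = ∑ c : V, if a = c then z a * Y c b else 0 := by simp
    rw [this, ← Finset.sum_add_distrib]
    refine Finset.sum_congr rfl fun c _ => ?_
    simp only [blockMat, of_apply, submatrix_apply]
    split_ifs with hac
    · ring
    · ring
  rw [h3, h1, eq_sub_of_add_eq h2.symm, h a a.2 b b.2, hent, one_apply]
  simp only [Subtype.ext_iff]
  ring

/-- Under the hypothesis of `blockMat_mul`, the KKT conditions for `Θ` restrict to KKT conditions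
for `blockMat Θ z V` with dual variable the principal submatrix of `Y`, so every
minimizer of the subproblem on `V` equals it. -/
theorem block_unique {C Θ Y : Matrix n n ℝ} (hC : C.IsSymm) (hΘ : MSet Θ) (hK : IsKKT C Θ Y)
    (z : n → ℝ) (V : Finset n)
    (h : ∀ a ∈ V, ∀ b ∈ V, ∑ m, (if m ∈ V then 0 else Θ a m * Y m b) = -(z a * Y a b))
    {X : Matrix V V ℝ} (hX : MSet X)
    (hmin : ∀ X' : Matrix V V ℝ, MSet X' →
      -Real.log X.det + (X * C.submatrix (fun a : V => (a : n)) (fun a : V => (a : n))).trace ≤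
      -Real.log X'.det + (X' * C.submatrix (fun a : V => (a : n)) (fun a : V => (a : n))).trace) :
    X = blockMat Θ z V := by
  obtain ⟨hXY, hYs, hYp, hdiag, hge, hcomp⟩ := hK
  have hmul := blockMat_mul hXY z V h
  have hYp' : (Y.submatrix (fun a : V => (a : n)) (fun a : V => (a : n))).PosDef :=
    hYp.submatrix Subtype.val_injective
  have hinv := inv_eq_left_inv hmul
  have hM : MSet (blockMat Θ z V) := by
    refine ⟨?_, hinv ▸ hYp'.inv, fun i j hij => ?_⟩
    · ext a b
      simp only [blockMat, transpose_apply, of_apply, eq_comm (a := b) (b := a)]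
      split_ifs with hab
      · subst hab; rfl
      · exact hΘ.1.apply a b
    · simpa [blockMat, hij] using hΘ.2.2 i j (fun h => hij (Subtype.ext h))
  refine eq_of_isKKT (hC.submatrix _) hM (Y := Y.submatrix _ _)
    ⟨hmul, hYs.submatrix _, hYp', fun i => hdiag i, fun i j => hge i j, fun i j hneg => ?_⟩ hX
    (hmin _ hM)
  by_cases hij : i = j
  · subst hij; exact hdiag i
  · exact hcomp i j (by simpa [blockMat, hij] using hneg)

end KKT

/-! ### The thresholded graph and its bridges -/

section Graph

variable {p : ℕ}

theorem adj_suppG {T : Matrix (Fin p) (Fin p) ℝ} {a b : Fin p} (hab : a ≠ b) (h : T a b ≠ 0) :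
    (suppG T).Adj a b := by
  simp [suppG, hab, h]

theorem thresh_symm {S Λ : Matrix (Fin p) (Fin p) ℝ} (hS : S.IsSymm) (hΛ : Λ.IsSymm)
    (a b : Fin p) : thresh S Λ a b = thresh S Λ b a := by
  simp only [thresh, of_apply, hS.apply b a, hΛ.apply b a, ne_comm]

theorem thresh_ne_zero_of_adj {S Λ : Matrix (Fin p) (Fin p) ℝ} (hS : S.IsSymm) (hΛ : Λ.IsSymm)
    {a b : Fin p} (h : (suppG (thresh S Λ)).Adj a b) : thresh S Λ a b ≠ 0 := by
  simp only [suppG, SimpleGraph.fromRel_adj] at h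
  rcases h.2 with h | h
  · exact h
  · rwa [thresh_symm hS hΛ]

theorem thresh_cases {S Λ : Matrix (Fin p) (Fin p) ℝ} {a b : Fin p} (h : thresh S Λ a b ≠ 0) :
    a ≠ b ∧ 0 < S a b - Λ a b ∧ thresh S Λ a b = S a b - Λ a b := by
  by_cases hc : a ≠ b ∧ Λ a b < S a b
  · exact ⟨hc.1, by linarith [hc.2], by simp only [thresh, of_apply, if_pos hc]⟩
  · exact absurd (by simp only [thresh, of_apply, if_neg hc]) h

theorem adj_bridgeDeleted {V : Type*} {G : SimpleGraph V} {a b : V} (h : G.Adj a b)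
    (hb : ¬G.IsBridge s(a, b)) : (bridgeDeleted G).Adj a b := by
  simp [bridgeDeleted, SimpleGraph.deleteEdges_adj, h, hb]

theorem reachable_deleteEdges {V : Type*} {G : SimpleGraph V} {a b i j : V}
    (h : (bridgeDeleted G).Reachable a b) (hb : G.IsBridge s(i, j)) :
    (G.deleteEdges {s(i, j)}).Reachable a b := by
  refine h.mono fun u v huv => ?_
  simp only [bridgeDeleted, SimpleGraph.deleteEdges_adj, Set.mem_ofPred_eq] at huv ⊢
  refine ⟨huv.1, fun he => huv.2 ?_⟩
  rw [Set.mem_singleton_iff] at he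
  rwa [he]

/-- The vertices `v` that cannot be reached from `i` once the edge `s(i, j)` is deleted. By the
definition of `SimpleGraph.IsBridge`, `farSide G i j j` says that `s(i, j)` is a bridge. -/
def farSide {V : Type*} (G : SimpleGraph V) (i j : V) (v : V) : Prop :=
  ¬(G.deleteEdges {s(i, j)}).Reachable i v

theorem not_farSide_self {V : Type*} (G : SimpleGraph V) (i j : V) : ¬farSide G i j i :=
  fun h => h (SimpleGraph.Reachable.refl i)

theorem not_adj_farSide {V : Type*} {G : SimpleGraph V} {i j a c : V}
    (ha : farSide G i j a) (hc : ¬farSide G i j c) (he : s(c, a) ≠ s(i, j)) : ¬G.Adj c a := by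
  intro h
  refine ha ((not_not.1 hc).trans (SimpleGraph.Adj.reachable ?_))
  rw [SimpleGraph.deleteEdges_adj]
  exact ⟨h, he⟩

end Graph

/-! ### Entries of the minimizer across bridges and inside blocks -/

section Assembly

variable {p : ℕ} {S Λ Θ Y : Matrix (Fin p) (Fin p) ℝ}

/-- The support of a KKT point lies in the thresholded graph: `Θ_ab < 0` gives
`0 < Y_ab = S_ab - Λ_ab`. -/
theorem adj_of_ne_zero (hΘ : MSet Θ) (hK : IsKKT (S - Λ) Θ Y) {a b : Fin p}
    (hab : a ≠ b) (h : Θ a b ≠ 0) : (suppG (thresh S Λ)).Adj a b := by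
  have hneg : Θ a b < 0 := lt_of_le_of_ne (hΘ.2.2 a b hab) h
  have h1 := inv_entry_pos hΘ hK.1 hK.2.2.1 hab hneg
  rw [hK.2.2.2.2.2 a b hneg, Matrix.sub_apply] at h1
  refine adj_suppG hab ?_
  simp only [thresh, of_apply]
  rw [if_pos ⟨hab, by linarith⟩]
  exact h1.ne'

/-- Across the cut given by a bridge `s(i, j)`, only the entry `(j, i)` of `Θ` can be nonzero. -/
theorem bridge_sep (hΘ : MSet Θ) (hK : IsKKT (S - Λ) Θ Y) {i j : Fin p}
    (hb : (suppG (thresh S Λ)).IsBridge s(i, j)) (a c : Fin p)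
    (ha : farSide (suppG (thresh S Λ)) i j a) (hc : ¬farSide (suppG (thresh S Λ)) i j c)
    (hne : c ≠ i ∨ a ≠ j) : Θ a c = 0 := by
  by_contra h
  have hca : a ≠ c := fun h => hc (h ▸ ha)
  have hj : farSide (suppG (thresh S Λ)) i j j := hb
  refine not_adj_farSide ha hc (fun he => ?_) (adj_of_ne_zero hΘ hK hca h).symm
  rcases Sym2.eq_iff.1 he with ⟨h1, h2⟩ | ⟨h1, h2⟩
  · tauto
  · exact hc (h1 ▸ hj)

theorem bridge_indep (hΘ : MSet Θ) (hK : IsKKT (S - Λ) Θ Y) {i j b : Fin p}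
    (hb : (suppG (thresh S Λ)).IsBridge s(i, j)) (hib : ¬farSide (suppG (thresh S Λ)) i j b) :
    Y i i * Y j b = Y i b * Y j i :=
  separation hΘ.2.1 hK.1 (farSide (suppG (thresh S Λ)) i j) (not_farSide_self _ i j)
    (fun a c ha hc hci => bridge_sep hΘ hK hb a c ha hc (Or.inl hci)) hb hib

/-- `SimpleGraph.IsBridge` does not require `i` and `j` to be adjacent; for non-adjacent vertices
in different components the last two statements read `Θ i j = 0` and `Y i j = 0`. -/
theorem bridge_entries (hS : S.IsSymm) (hΛ : Λ.IsSymm) (hΘ : MSet Θ) (hK : IsKKT (S - Λ) Θ Y)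
    (hd : ∀ i, Y i i = S i i) {i j : Fin p} (hb : (suppG (thresh S Λ)).IsBridge s(i, j)) :
    0 < S i i * S j j - thresh S Λ i j ^ 2 ∧
      Θ i j = -(thresh S Λ i j) / (S i i * S j j - thresh S Λ i j ^ 2) ∧
      Y i j = thresh S Λ i j := by
  set G := suppG (thresh S Λ) with hG
  have hij : i ≠ j := fun h => not_farSide_self G i j (by
    have : farSide G i j j := hb
    exact h ▸ this)
  have hcut := cut_entry hΘ.2.1 hK.1 hK.2.1 (farSide G i j) (not_farSide_self G i j) hb
    (fun a c ha hc hci => bridge_sep hΘ hK hb a c ha hc (Or.inl hci))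
    (fun c hc hcj => by
      rw [← hΘ.1.apply i c]
      exact bridge_sep hΘ hK hb c i hc (not_farSide_self G i j) (Or.inr hcj))
  have hYij : Y i j = thresh S Λ i j := by
    by_cases hT : thresh S Λ i j = 0
    · have h0 : Θ i j = 0 := by
        by_contra h
        exact thresh_ne_zero_of_adj hS hΛ (adj_of_ne_zero hΘ hK hij h) hT
      rw [h0] at hcut
      linarith
    · obtain ⟨-, hpos, heq⟩ := thresh_cases hT
      have hle := hK.2.2.2.2.1 i j
      rw [Matrix.sub_apply] at hle
      -- a vanishing `Θ i j` would force `Y i j = 0`, below the lower bound `S i j - Λ i j > 0`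
      have hneg : Θ i j < 0 := by
        refine lt_of_le_of_ne (hΘ.2.2 i j hij) fun h => ?_
        rw [h] at hcut
        linarith
      rw [hK.2.2.2.2.2 i j hneg, heq, Matrix.sub_apply]
  have hpos : 0 < Y i i * Y j j - Y i j ^ 2 := by
    have h1 : (Y.submatrix ![i, j] ![i, j]).PosDef := by
      refine hK.2.2.1.submatrix ?_
      intro a b h
      fin_cases a <;> fin_cases b <;> simp_all
    have h2 := h1.det_pos
    rw [det_fin_two] at h2
    simp only [submatrix_apply, cons_val_zero, cons_val_one] at h2
    rw [hK.2.1.apply i j] at h2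
    linarith
  rw [hd, hd, hYij] at hcut hpos
  exact ⟨hpos, by rw [eq_div_iff hpos.ne', hcut], hYij⟩

/-- The columns outside a block contribute `-ζ_a Y_ab` to row `a`: an outside neighbour `m` of `a`
in the support of `Θ` is joined to it by a bridge, which separates `m` from the block, so that
`Y_mb = Y_ma Y_ab / Y_aa`. -/
theorem block_sum (hS : S.IsSymm) (hΛ : Λ.IsSymm) (hSd : ∀ i, 0 < S i i) (hΘ : MSet Θ)
    (hK : IsKKT (S - Λ) Θ Y) (hd : ∀ i, Y i i = S i i) {V : Finset (Fin p)}
    (hV : IsBlock (suppG (thresh S Λ)) V) {a b : Fin p} (ha : a ∈ V) (hb : b ∈ V) :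
    ∑ m, (if m ∈ V then 0 else Θ a m * Y m b) = -(zeta S Λ a * Y a b) := by
  set G := suppG (thresh S Λ) with hG
  obtain ⟨r, hr⟩ := hV
  have hreach : ∀ c, c ∈ V ↔ (bridgeDeleted G).Reachable a c := fun c =>
    ⟨fun hc => ((hr a).1 ha).symm.trans ((hr c).1 hc), fun hc => (hr c).2 (((hr a).1 ha).trans hc)⟩
  rw [zeta, zetaT, Finset.mul_sum, Finset.sum_mul, ← Finset.sum_neg_distrib]
  refine Finset.sum_congr rfl fun m _ => ?_
  by_cases hm : G.IsBridge s(a, m)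
  · have hmV : m ∉ V := fun h => hm (reachable_deleteEdges ((hreach m).1 h) hm)
    rw [if_neg hmV, if_pos hm]
    obtain ⟨hpos, hent, hY⟩ := bridge_entries hS hΛ hΘ hK hd hm
    have hind := bridge_indep hΘ hK hm
      (not_not.2 (reachable_deleteEdges ((hreach b).1 hb) hm) : ¬farSide G a m b)
    rw [hd, hK.2.1.apply a m, hY] at hind
    have hmb : Y m b = Y a b * thresh S Λ a m / S a a := by
      rw [eq_div_iff (hSd a).ne', ← hind]; ring
    have := (hSd a).ne'
    rw [hent, hmb]
    field_simp
  · rw [if_neg hm]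
    by_cases hmV : m ∈ V
    · simp [hmV]
    · have h0 : Θ a m = 0 := by
        by_contra h
        have hne : a ≠ m := fun h => hmV (h ▸ ha)
        exact hmV ((hreach m).2 (adj_bridgeDeleted (adj_of_ne_zero hΘ hK hne h) hm).reachable)
      simp [hmV, h0]

end Assembly

/-- Theorem 1, bridge-block decomposition of the MTP₂ minimizer. -/
theorem stmt_0 {p : ℕ} (hp : 1 ≤ p)
    (S Λ : Matrix (Fin p) (Fin p) ℝ)
    (hSsymm : S.IsSymm) (hΛsymm : Λ.IsSymm)
    (hSdiag : ∀ i, 0 < S i i) (hΛnn : ∀ i j, 0 ≤ Λ i j) (hΛdiag : ∀ i, Λ i i = 0)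
    (hA1 : ∀ i j, i ≠ j → S i j < Real.sqrt (S i i * S j j))
    (Θstar : Matrix (Fin p) (Fin p) ℝ)
    (hmem : MSet Θstar)
    (hmin : ∀ Θ' : Matrix (Fin p) (Fin p) ℝ, MSet Θ' → objf S Λ Θstar ≤ objf S Λ Θ') :
    (∀ V : Finset (Fin p), IsBlock (suppG (thresh S Λ)) V →
      ∀ Θhat : Matrix ↥V ↥V ℝ, IsSubMinimizer S Λ V Θhat →
        ∀ i, ∀ hi : i ∈ V, ∀ j, ∀ hj : j ∈ V,
          Θstar i j =
            if i = j then Θhat ⟨i, hi⟩ ⟨j, hj⟩ + zeta S Λ i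
            else Θhat ⟨i, hi⟩ ⟨j, hj⟩) ∧
    (∀ i j, (suppG (thresh S Λ)).IsBridge s(i, j) →
      Θstar i j = -(thresh S Λ i j) / (S i i * S j j - thresh S Λ i j ^ 2)) ∧
    (∀ i j, i ≠ j → ¬(bridgeDeleted (suppG (thresh S Λ))).Reachable i j →
      ¬(suppG (thresh S Λ)).IsBridge s(i, j) → Θstar i j = 0) := by
  have hmin' : ∀ Θ' : Matrix (Fin p) (Fin p) ℝ, MSet Θ' →
      -Real.log Θstar.det + (Θstar * (S - Λ)).trace ≤
        -Real.log Θ'.det + (Θ' * (S - Λ)).trace := fun Θ' h => by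
    rw [← objf_eq hΛsymm hΛdiag hmem, ← objf_eq hΛsymm hΛdiag h]
    exact hmin Θ' h
  obtain ⟨Y, hK⟩ := exists_isKKT (hSsymm.sub hΛsymm) hmem hmin'
  have hd : ∀ i, Y i i = S i i := fun i => by
    rw [hK.2.2.2.1 i, Matrix.sub_apply, hΛdiag, sub_zero]
  refine ⟨fun V hV Θhat hhat i hi j hj => ?_, fun i j hb => ?_, fun i j hij hr hb => ?_⟩
  · have hX := block_unique (hSsymm.sub hΛsymm) hmem hK (zeta S Λ) V
      (fun a ha b hb => block_sum hSsymm hΛsymm hSdiag hmem hK hd hV ha hb) hhat.1 hhat.2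
    rw [hX]
    by_cases hij : i = j
    · subst hij
      simp [blockMat]
    · simp [blockMat, hij]
  · exact (bridge_entries hSsymm hΛsymm hmem hK hd hb).2.1
  · by_contra h
    exact hr (adj_bridgeDeleted (adj_of_ne_zero hmem hK hij h) hb).reachable
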